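/- Let L be a finite-dimensional graded maximal subalgebra of Vect_pol(E). Then L_{−1} = Vect_{−1}(E) and the representation of L_0 = L ∩ Vect_0(E) on L_{−1} given by the adjoint action is irreducible. -/

import Mathlib

/-!
A finite-dimensional maximal subalgebra `L` cannot lie in a proper infinite-dimensional
subalgebra. Such subalgebras are produced as stabilizers of subspaces of the polynomial algebra,
and `L` is shown to lie in one of them whenever the conclusion fails.

* If `F = L₋₁` is not all of `Vect₋₁`, let `I` be the space of polynomials vanishing on the linear
  subspace `F ⊆ E`, encoded as the largest subspace of polynomials vanishing at `0` and stable
  under the constant fields of `F` (`vanishingSpace`). Since `D X g = X D g + [D, X] g` and the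
  non-constant homogeneous components of a field in `L` vanish at `0`, the space `I + L · I` has
  these two properties as well, so `L` stabilizes `I`. A nonzero linear form `ℓ` killed by `F`
  exists (`exists_linear_form`); it shows that the stabilizer is proper, and that it is
  infinite-dimensional because it contains all `(ℓ h) ∂`.

* If `L₋₁ = Vect₋₁` and `F` is a proper nonzero `L₀`-stable subspace of it, let `A` be the algebra
  of polynomials constant along `F` (`invariants`). For `D ∈ F`, `X ∈ L`, the span of all
  polynomials `[D, X] g` with `g ∈ A` is stable under partial derivatives, because constant fields
  commute, belong to `L` and preserve `A`; its members vanish at `0`, since `[D, X]` is in `F` for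
  `X` of degree `0`, and it vanishes at `0` for `X` of any other degree. So these polynomials are
  all zero, that is, `L` stabilizes `A`. The stabilizer of `A` is proper and contains all
  `h D` with `D ∈ F`.
-/

open MvPolynomial

/-- The Lie algebra of polynomial vector fields on `E = 𝕜^n`, realized as the
derivations of the polynomial algebra `𝕜[x_1, …, x_n]`. -/
abbrev Vect (𝕜 : Type*) [Field 𝕜] (n : ℕ) : Type _ :=
  Derivation 𝕜 (MvPolynomial (Fin n) 𝕜) (MvPolynomial (Fin n) 𝕜)

variable (𝕜 : Type*) [Field 𝕜] (n : ℕ)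

/-- The Euler vector field `ℰ = Σ x^j ∂_j`. -/
noncomputable def euler : Vect 𝕜 n :=
  MvPolynomial.mkDerivation 𝕜 fun i => MvPolynomial.X i

/-- `Vect_p(E)`: the eigenspace of `ad(ℰ)` for the eigenvalue `p`, i.e. the vector fields
with homogeneous coefficients of degree `p+1`. -/
noncomputable def VectP (p : ℤ) : Submodule 𝕜 (Vect 𝕜 n) :=
  Module.End.eigenspace (LieAlgebra.ad 𝕜 (Vect 𝕜 n) (euler 𝕜 n)) ((p : 𝕜))

/-- A Lie subalgebra `L` of `Vect_pol(E)` is graded if `L = ⊕_{p ≥ -1} (L ∩ Vect_p(E))`. -/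
def IsGradedSubalg (L : LieSubalgebra 𝕜 (Vect 𝕜 n)) : Prop :=
  L.toSubmodule = ⨆ p ≥ (-1 : ℤ), (L.toSubmodule ⊓ VectP 𝕜 n p)

/-- A Lie subalgebra `L` of `Vect_pol(E)` is maximal if the only subalgebras containing it
are `L` itself and `Vect_pol(E)`. -/
def IsMaxSubalg (L : LieSubalgebra 𝕜 (Vect 𝕜 n)) : Prop :=
  ∀ L' : LieSubalgebra 𝕜 (Vect 𝕜 n), L ≤ L' → L' = L ∨ L' = ⊤

/-- A graded subalgebra `L` is irreducible if the representation of `L₀ = L ∩ Vect_0(E)` on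
`L₋₁ = L ∩ Vect_{-1}(E)` given by the adjoint action is irreducible. -/
def IsIrreducibleRep (L : LieSubalgebra 𝕜 (Vect 𝕜 n)) : Prop :=
  L.toSubmodule ⊓ VectP 𝕜 n (-1) ≠ ⊥ ∧
    ∀ F : Submodule 𝕜 (Vect 𝕜 n), F ≤ L.toSubmodule ⊓ VectP 𝕜 n (-1) →
      (∀ x ∈ L.toSubmodule ⊓ VectP 𝕜 n 0, ∀ y ∈ F, ⁅x, y⁆ ∈ F) →
      F = ⊥ ∨ F = L.toSubmodule ⊓ VectP 𝕜 n (-1)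

section Helpers

variable {𝕜 : Type*} [Field 𝕜] {n : ℕ}

/-! ### Vector fields in coordinates and the grading -/

lemma vect_apply (D : Vect 𝕜 n) (p : MvPolynomial (Fin n) 𝕜) :
    D p = ∑ i, D (X i) * pderiv i p := by
  classical
  have h : D = ∑ i, (D (X i)) • (pderiv i : Vect 𝕜 n) := by
    apply MvPolynomial.derivation_ext
    intro j
    rw [← Derivation.coeFnAddMonoidHom_apply (∑ i, _), map_sum, Finset.sum_apply]
    simp [pderiv_X, Pi.single_apply]
  conv_lhs => rw [h]
  rw [← Derivation.coeFnAddMonoidHom_apply, map_sum, Finset.sum_apply]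
  simp

lemma coeff_euler (p : MvPolynomial (Fin n) 𝕜) (m : Fin n →₀ ℕ) :
    coeff m (euler 𝕜 n p) = (m.degree : 𝕜) * coeff m p := by
  classical
  induction p using MvPolynomial.induction_on' with
  | monomial s a =>
    have h : (monomial s a : MvPolynomial (Fin n) 𝕜).IsHomogeneous s.degree :=
      isHomogeneous_monomial a rfl
    have h2 := h.sum_X_mul_pderiv
    rw [vect_apply]
    simp only [euler, mkDerivation_X]
    rw [h2, coeff_smul, coeff_monomial]
    split_ifs with hs
    · subst hs; simp
    · simp
  | add p q hp hq => rw [map_add, coeff_add, hp, hq, coeff_add, mul_add]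

lemma mem_VectP {p : ℤ} {D : Vect 𝕜 n} : D ∈ VectP 𝕜 n p ↔ ⁅euler 𝕜 n, D⁆ = (p : 𝕜) • D := by
  rw [VectP, Module.End.mem_eigenspace_iff, LieAlgebra.ad_apply]

lemma euler_apply_of_mem {p : ℤ} {D : Vect 𝕜 n} (h : D ∈ VectP 𝕜 n p) (i : Fin n) :
    euler 𝕜 n (D (X i)) = ((p : 𝕜) + 1) • D (X i) := by
  have h1 := congrArg (fun Y : Vect 𝕜 n => Y (X i)) (mem_VectP.1 h)
  simp only [Derivation.commutator_apply, Derivation.smul_apply] at h1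
  have h2 : euler 𝕜 n (X i) = X i := by simp [euler]
  rw [h2] at h1
  rw [add_smul, one_smul, ← h1]; abel

lemma lie_mem_VectP {p q : ℤ} {D D' : Vect 𝕜 n} (h : D ∈ VectP 𝕜 n p) (h' : D' ∈ VectP 𝕜 n q) :
    ⁅D, D'⁆ ∈ VectP 𝕜 n (p + q) := by
  rw [mem_VectP] at *
  apply Derivation.ext
  intro a
  have e : ∀ b, euler 𝕜 n (D b) - D (euler 𝕜 n b) = C (p : 𝕜) * D b := fun b => by
    rw [← smul_eq_C_mul, ← Derivation.commutator_apply, h, Derivation.smul_apply]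
  have e' : ∀ b, euler 𝕜 n (D' b) - D' (euler 𝕜 n b) = C (q : 𝕜) * D' b := fun b => by
    rw [← smul_eq_C_mul, ← Derivation.commutator_apply, h', Derivation.smul_apply]
  have f := congrArg D (e' a)
  have f' := congrArg D' (e a)
  simp only [map_sub, ← smul_eq_C_mul, Derivation.map_smul] at f f'
  have e1 := e (D' a)
  have e1' := e' (D a)
  simp only [smul_eq_C_mul] at f f'
  simp only [Derivation.commutator_apply, Derivation.smul_apply, map_sub, smul_eq_C_mul,
    Int.cast_add, C_add]
  linear_combination e1 - e1' + f - f'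

lemma pderiv_mem (i : Fin n) : (pderiv i : Vect 𝕜 n) ∈ VectP 𝕜 n (-1) := by
  classical
  rw [mem_VectP]
  apply MvPolynomial.derivation_ext
  intro j
  simp only [Derivation.commutator_apply, Derivation.smul_apply, euler, mkDerivation_X, pderiv_X,
    Pi.single_apply]
  split_ifs <;> simp

/-- Fields of degree `≥ 0` vanish at the origin. -/
lemma constCoeff_of_mem [CharZero 𝕜] {p : ℤ} (hp : 0 ≤ p) {D : Vect 𝕜 n} (h : D ∈ VectP 𝕜 n p)
    (g : MvPolynomial (Fin n) 𝕜) : constantCoeff (D g) = 0 := by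
  rw [vect_apply, map_sum]
  refine Finset.sum_eq_zero fun i _ => ?_
  have h1 := congrArg (coeff 0) (euler_apply_of_mem h i)
  rw [coeff_euler, coeff_smul] at h1
  have hne : (p : 𝕜) + 1 ≠ 0 := by
    have : ((p + 1 : ℤ) : 𝕜) ≠ 0 := by rw [Int.cast_ne_zero]; omega
    simpa using this
  have h2 : constantCoeff (D (X i)) = 0 := by
    rw [constantCoeff_eq]
    simpa [hne] using h1.symm
  rw [map_mul, h2, zero_mul]

/-- Fields of degree `-1` have constant coefficients. -/
lemma const_of_mem [CharZero 𝕜] {D : Vect 𝕜 n} (h : D ∈ VectP 𝕜 n (-1)) (i : Fin n) :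
    D (X i) = C (constantCoeff (D (X i))) := by
  classical
  ext m
  rw [coeff_C]
  split_ifs with hm
  · subst hm; rfl
  · have h1 := congrArg (coeff m) (euler_apply_of_mem h i)
    rw [coeff_euler] at h1
    have hd : (m.degree : 𝕜) ≠ 0 := by
      rw [Nat.cast_ne_zero]
      exact fun h0 => hm ((Finsupp.degree_eq_zero_iff m).1 h0).symm
    simpa [hd] using h1

lemma lie_const [CharZero 𝕜] {D D' : Vect 𝕜 n} (h : D ∈ VectP 𝕜 n (-1))
    (h' : D' ∈ VectP 𝕜 n (-1)) : ⁅D, D'⁆ = 0 := by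
  apply MvPolynomial.derivation_ext
  intro i
  rw [Derivation.commutator_apply, const_of_mem h i, const_of_mem h' i]
  simp

/-- Induction over a graded subalgebra along its homogeneous elements. -/
lemma graded_induction {L : LieSubalgebra 𝕜 (Vect 𝕜 n)} (hL : IsGradedSubalg 𝕜 n L)
    {P : Vect 𝕜 n → Prop} (hom : ∀ p : ℤ, -1 ≤ p → ∀ Y ∈ L, Y ∈ VectP 𝕜 n p → P Y)
    (zero : P 0) (add : ∀ Y Z, P Y → P Z → P (Y + Z)) {Y : Vect 𝕜 n} (hY : Y ∈ L) : P Y := by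
  have h : Y ∈ L.toSubmodule := hY
  rw [hL] at h
  refine Submodule.iSup_induction _ (motive := P) h (fun p Y hY => ?_) zero add
  refine Submodule.iSup_induction _ (motive := P) hY (fun hp Y hY => ?_) zero add
  exact hom p hp Y hY.1 hY.2

/-- A proper subspace of the constant fields kills some nonzero linear form `l`. Only what is used
later is recorded: `l` vanishes at the origin, and some vector field maps it to `1`. -/
lemma exists_linear_form [CharZero 𝕜] {F : Submodule 𝕜 (Vect 𝕜 n)} (hF : F ≤ VectP 𝕜 n (-1))
    (hne : F ≠ VectP 𝕜 n (-1)) :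
    ∃ l : MvPolynomial (Fin n) 𝕜, constantCoeff l = 0 ∧ (∀ D ∈ F, D l = 0) ∧
      ∃ D : Vect 𝕜 n, D l = 1 := by
  classical
  let φ : Vect 𝕜 n →ₗ[𝕜] (Fin n → 𝕜) :=
    { toFun := fun D i => constantCoeff (D (X i))
      map_add' := fun D D' => by ext i; simp
      map_smul' := fun a D => by ext i; simp [smul_eq_C_mul] }
  have hlt : F.map φ < ⊤ := by
    rw [lt_top_iff_ne_top]
    intro htop
    refine hne (le_antisymm hF fun D hD => ?_)
    have : φ D ∈ F.map φ := by rw [htop]; trivial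
    obtain ⟨D', hD', he⟩ := this
    have : D = D' := by
      apply MvPolynomial.derivation_ext
      intro i
      rw [const_of_mem hD i, const_of_mem (hF hD') i]
      exact congrArg C (congrFun he i).symm
    exact this ▸ hD'
  obtain ⟨f, hf0, hf⟩ := Submodule.exists_le_ker_of_lt_top _ hlt
  have hfe : ∀ v, f v = ∑ i, v i * f (Pi.single i 1) := by
    intro v
    conv_lhs => rw [pi_eq_sum_univ' v]
    rw [map_sum]
    refine Finset.sum_congr rfl fun i _ => ?_
    rw [map_smul, smul_eq_mul]
  obtain ⟨k, hk⟩ : ∃ k, f (Pi.single k 1) ≠ 0 := by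
    by_contra! hall
    exact hf0 (LinearMap.ext fun v => by rw [hfe]; simp [hall])
  refine ⟨∑ i, f (Pi.single i 1) • X i, by simp [smul_eq_C_mul], fun D hD => ?_,
    (f (Pi.single k 1))⁻¹ • (pderiv k : Vect 𝕜 n), ?_⟩
  · have h1 : f (φ D) = 0 := hf (Submodule.mem_map_of_mem hD)
    rw [hfe] at h1
    rw [map_sum]
    have h2 : ∀ i, D (f (Pi.single i 1) • X i) = C (φ D i * f (Pi.single i 1)) := by
      intro i
      rw [Derivation.map_smul, const_of_mem (hF hD) i, smul_eq_C_mul, ← C_mul, mul_comm]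
      rfl
    rw [Finset.sum_congr rfl fun i _ => h2 i, ← map_sum, h1, C_0]
  · rw [map_sum]
    simp only [Derivation.map_smul, Derivation.smul_apply, pderiv_X, Pi.single_apply]
    simp [hk]

/-- A subspace of polynomials stable under all `∂_i` whose members vanish at the origin is zero,
by Taylor's formula. -/
lemma eq_zero_of_stable [CharZero 𝕜] (P : Submodule 𝕜 (MvPolynomial (Fin n) 𝕜))
    (h0 : ∀ p ∈ P, constantCoeff p = 0) (hd : ∀ p ∈ P, ∀ i, pderiv i p ∈ P)
    {p : MvPolynomial (Fin n) 𝕜} (hp : p ∈ P) : p = 0 := by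
  classical
  have key : ∀ d : ℕ, ∀ m : Fin n →₀ ℕ, m.degree = d → ∀ p ∈ P, coeff m p = 0 := by
    intro d
    induction d with
    | zero =>
      intro m hm p hp
      rw [(Finsupp.degree_eq_zero_iff m).1 hm]
      exact h0 p hp
    | succ d ih =>
      intro m hm p hp
      have hm0 : m ≠ 0 := by rintro rfl; simp at hm
      obtain ⟨i, hi⟩ := Finsupp.ne_iff.1 hm0
      have hi : m i ≠ 0 := hi
      have hms : m - Finsupp.single i 1 + Finsupp.single i 1 = m :=
        tsub_add_cancel_of_le (by
          rw [Finsupp.single_le_iff]; omega)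
      have hdeg : (m - Finsupp.single i 1).degree = d := by
        have := congrArg Finsupp.degree hms
        rw [map_add, Finsupp.degree_single] at this
        omega
      have h1 := ih _ hdeg _ (hd p hp i)
      rw [coeff_pderiv, hms] at h1
      exact (mul_eq_zero.1 h1).resolve_right (Nat.cast_add_one_ne_zero _)
  ext m
  rw [coeff_zero]
  exact key _ m rfl p hp

/-! ### Stabilizers as proper infinite-dimensional subalgebras -/

/-- The subalgebra of vector fields that preserve a subspace `W` of the polynomial algebra. -/
noncomputable def stabilizerSubalg (W : Submodule 𝕜 (MvPolynomial (Fin n) 𝕜)) : LieSubalgebra 𝕜 (Vect 𝕜 n) where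
  carrier := {Y | ∀ g ∈ W, Y g ∈ W}
  add_mem' := fun ha hb g hg => W.add_mem (ha g hg) (hb g hg)
  zero_mem' := fun _ _ => W.zero_mem
  smul_mem' := fun c _ ha g hg => W.smul_mem c (ha g hg)
  lie_mem' := fun {a b} ha hb g hg => by
    change ⁅a, b⁆ g ∈ W
    rw [Derivation.commutator_apply]
    exact W.sub_mem (ha _ (hb g hg)) (hb _ (ha g hg))

lemma mem_stabilizerSubalg {W : Submodule 𝕜 (MvPolynomial (Fin n) 𝕜)} {Y : Vect 𝕜 n} :
    Y ∈ stabilizerSubalg W ↔ ∀ g ∈ W, Y g ∈ W := Iff.rfl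

lemma false_of_le (hn : 0 < n) {L L' : LieSubalgebra 𝕜 (Vect 𝕜 n)} (hfd : FiniteDimensional 𝕜 L)
    (hmax : IsMaxSubalg 𝕜 n L) (hle : L ≤ L') (htop : L' ≠ ⊤)
    {l : MvPolynomial (Fin n) 𝕜} (hl : l ≠ 0) {D : Vect 𝕜 n} (hD : D ≠ 0)
    (hmem : ∀ h : MvPolynomial (Fin n) 𝕜, (l * h) • D ∈ L') : False := by
  rcases hmax L' hle with rfl | h
  swap
  · exact htop h
  let ψ : MvPolynomial (Fin n) 𝕜 →ₗ[𝕜] L' :=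
    { toFun := fun h => ⟨(l * h) • D, hmem h⟩
      map_add' := fun a b => by
        apply Subtype.ext
        change (l * (a + b)) • D = (l * a) • D + (l * b) • D
        rw [mul_add, add_smul]
      map_smul' := fun c a => by
        apply Subtype.ext
        change (l * (c • a)) • D = c • ((l * a) • D)
        rw [mul_smul_comm, smul_assoc] }
  obtain ⟨i, hi⟩ : ∃ i, D (X i) ≠ 0 := by
    by_contra! hall
    exact hD (MvPolynomial.derivation_ext fun i => by simp [hall i])
  have hinj : Function.Injective ψ := by
    rw [← LinearMap.ker_eq_bot, LinearMap.ker_eq_bot']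
    intro h hh
    have h1 : (l * h) • D = 0 := congrArg Subtype.val hh
    have h2 := congrArg (fun Y : Vect 𝕜 n => Y (X i)) h1
    simpa [hl, hi] using h2
  have : FiniteDimensional 𝕜 (MvPolynomial (Fin n) 𝕜) := Module.Finite.of_injective ψ hinj
  have hfin : Finite (Fin n →₀ ℕ) := Module.Finite.finite_basis (basisMonomials (Fin n) 𝕜)
  have : Nonempty (Fin n) := ⟨⟨0, hn⟩⟩
  exact not_finite (Fin n →₀ ℕ)

/-! ### Polynomials vanishing along a space of constant fields -/

/-- The largest `F`-stable space of polynomials vanishing at the origin. For a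
space `F` of constant fields, these are the polynomials vanishing on the linear subspace `F`. -/
noncomputable def vanishingSpace (F : Submodule 𝕜 (Vect 𝕜 n)) : Submodule 𝕜 (MvPolynomial (Fin n) 𝕜) :=
  sSup {P | (∀ g ∈ P, constantCoeff g = 0) ∧ ∀ D ∈ F, ∀ g ∈ P, D g ∈ P}

lemma constCoeff_of_mem_vanishing {F : Submodule 𝕜 (Vect 𝕜 n)} {g : MvPolynomial (Fin n) 𝕜}
    (hg : g ∈ vanishingSpace F) : constantCoeff g = 0 := by
  have : vanishingSpace F ≤ LinearMap.ker (lcoeff 𝕜 (0 : Fin n →₀ ℕ)) :=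
    sSup_le fun P hP g hg => hP.1 g hg
  exact this hg

lemma vanishing_stable {F : Submodule 𝕜 (Vect 𝕜 n)} {D : Vect 𝕜 n} (hD : D ∈ F)
    {g : MvPolynomial (Fin n) 𝕜} (hg : g ∈ vanishingSpace F) : D g ∈ vanishingSpace F := by
  have : vanishingSpace F ≤ (vanishingSpace F).comap D.toLinearMap :=
    sSup_le fun P hP g hg => (le_sSup (a := P) hP : P ≤ vanishingSpace F) (hP.2 D hD g hg)
  exact this hg

lemma le_stabilizer_vanishing [CharZero 𝕜] {L : LieSubalgebra 𝕜 (Vect 𝕜 n)}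
    (hL : IsGradedSubalg 𝕜 n L) :
    L ≤ stabilizerSubalg (vanishingSpace (L.toSubmodule ⊓ VectP 𝕜 n (-1))) := by
  set F := L.toSubmodule ⊓ VectP 𝕜 n (-1) with hFdef
  let Q : Submodule 𝕜 (MvPolynomial (Fin n) 𝕜) :=
    vanishingSpace F ⊔ Submodule.span 𝕜 {q | ∃ Y ∈ L, ∃ g ∈ vanishingSpace F, Y g = q}
  have hgen : ∀ Y ∈ L, ∀ g ∈ vanishingSpace F, Y g ∈ Q := fun Y hY g hg =>
    (le_sup_right : _ ≤ Q) (Submodule.subset_span ⟨Y, hY, g, hg, rfl⟩)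
  have hQ : Q ≤ vanishingSpace F := by
    refine le_sSup ⟨?_, ?_⟩
    · suffices Q ≤ LinearMap.ker (lcoeff 𝕜 (0 : Fin n →₀ ℕ)) from fun g hg => this hg
      refine sup_le (fun g hg => constCoeff_of_mem_vanishing hg) (Submodule.span_le.2 ?_)
      rintro _ ⟨Y, hY, g, hg, rfl⟩
      change constantCoeff (Y g) = 0
      refine graded_induction hL (P := fun Y => constantCoeff (Y g) = 0) ?_ (by simp) ?_ hY
      · intro p hp Y hY hYp
        rcases hp.eq_or_lt with rfl | hp
        · exact constCoeff_of_mem_vanishing (vanishing_stable (F := F) (Submodule.mem_inf.2 ⟨hY, hYp⟩) hg)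
        · exact constCoeff_of_mem (by omega) hYp g
      · intro Y Z hY hZ
        rw [Derivation.add_apply, map_add, hY, hZ, add_zero]
    · intro D hD
      suffices Q ≤ Q.comap D.toLinearMap from fun g hg => this hg
      refine sup_le (fun g hg => (le_sup_left : _ ≤ Q) (vanishing_stable hD hg))
        (Submodule.span_le.2 ?_)
      rintro _ ⟨Y, hY, g, hg, rfl⟩
      change D (Y g) ∈ Q
      have h : D (Y g) = ⁅D, Y⁆ g + Y (D g) := by rw [Derivation.commutator_apply]; abel
      rw [h]
      exact Q.add_mem (hgen _ (L.lie_mem hD.1 hY) g hg) (hgen _ hY _ (vanishing_stable hD hg))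
  exact fun Y hY g hg => hQ (hgen Y hY g hg)

lemma degree_neg_one_eq [CharZero 𝕜] (hn : 0 < n) {L : LieSubalgebra 𝕜 (Vect 𝕜 n)}
    (hfd : FiniteDimensional 𝕜 L) (hL : IsGradedSubalg 𝕜 n L) (hmax : IsMaxSubalg 𝕜 n L) :
    L.toSubmodule ⊓ VectP 𝕜 n (-1) = VectP 𝕜 n (-1) := by
  by_contra hne
  obtain ⟨l, hl0, hlF, D, hDl⟩ := exists_linear_form inf_le_right hne
  have hl : l ≠ 0 := by rintro rfl; simp at hDl
  have hD : D ≠ 0 := by rintro rfl; simp at hDl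
  have hmul : ∀ h, l * h ∈ vanishingSpace (L.toSubmodule ⊓ VectP 𝕜 n (-1)) := by
    have : LinearMap.range (LinearMap.mulLeft 𝕜 l) ≤
        vanishingSpace (L.toSubmodule ⊓ VectP 𝕜 n (-1)) := by
      refine le_sSup ⟨?_, ?_⟩
      · rintro _ ⟨h, rfl⟩
        simp [hl0]
      · rintro D hD _ ⟨h, rfl⟩
        refine ⟨D h, ?_⟩
        simp [hlF D hD]
    exact fun h => this ⟨h, rfl⟩
  refine false_of_le hn hfd hmax (le_stabilizer_vanishing hL) ?_ hl hD (fun h g _ => ?_)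
  · intro htop
    have hDm : D ∈ stabilizerSubalg (vanishingSpace (L.toSubmodule ⊓ VectP 𝕜 n (-1))) := by
      rw [htop]; trivial
    have h1 := hDm l (by simpa using hmul 1)
    rw [hDl] at h1
    simpa using constCoeff_of_mem_vanishing h1
  · rw [Derivation.smul_apply, smul_eq_mul, mul_assoc]
    exact hmul _

/-! ### Polynomials constant along a space of constant fields -/

/-- The polynomials annihilated by all the fields in `F`. -/
noncomputable def invariants (F : Submodule 𝕜 (Vect 𝕜 n)) : Submodule 𝕜 (MvPolynomial (Fin n) 𝕜) where
  carrier := {g | ∀ D ∈ F, D g = 0}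
  add_mem' := fun ha hb D hD => by rw [map_add, ha D hD, hb D hD, add_zero]
  zero_mem' := fun D _ => map_zero D
  smul_mem' := fun c g hg D hD => by rw [Derivation.map_smul, hg D hD, smul_zero]

lemma lie_apply_invariants [CharZero 𝕜] {L : LieSubalgebra 𝕜 (Vect 𝕜 n)}
    (hL : IsGradedSubalg 𝕜 n L) (hconst : VectP 𝕜 n (-1) ≤ L.toSubmodule)
    {F : Submodule 𝕜 (Vect 𝕜 n)} (hF : F ≤ VectP 𝕜 n (-1))
    (hstab : ∀ x ∈ L.toSubmodule ⊓ VectP 𝕜 n 0, ∀ y ∈ F, ⁅x, y⁆ ∈ F)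
    {D : Vect 𝕜 n} (hD : D ∈ F) {Y : Vect 𝕜 n} (hY : Y ∈ L)
    {g : MvPolynomial (Fin n) 𝕜} (hg : g ∈ invariants F) : ⁅D, Y⁆ g = 0 := by
  let P : Submodule 𝕜 (MvPolynomial (Fin n) 𝕜) :=
    Submodule.span 𝕜 {q | ∃ Y ∈ L, ∃ g ∈ invariants F, ⁅D, Y⁆ g = q}
  have hgen : ∀ Y ∈ L, ∀ g ∈ invariants F, ⁅D, Y⁆ g ∈ P := fun Y hY g hg =>
    Submodule.subset_span ⟨Y, hY, g, hg, rfl⟩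
  refine eq_zero_of_stable P ?_ ?_ (hgen Y hY g hg)
  · suffices P ≤ LinearMap.ker (lcoeff 𝕜 (0 : Fin n →₀ ℕ)) from fun g hg => this hg
    refine Submodule.span_le.2 ?_
    rintro _ ⟨Y, hY, g, hg, rfl⟩
    change constantCoeff (⁅D, Y⁆ g) = 0
    refine graded_induction hL (P := fun Y => constantCoeff (⁅D, Y⁆ g) = 0) ?_
      (by simp [Derivation.commutator_apply]) ?_ hY
    · intro p hp Y hY hYp
      rcases hp.eq_or_lt with rfl | hp
      · rw [lie_const (hF hD) hYp]; simp
      rcases (show 0 ≤ p by omega).eq_or_lt with rfl | hp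
      · rw [← lie_skew, Derivation.neg_apply, hg _ (hstab Y ⟨hY, hYp⟩ D hD)]; simp
      · exact constCoeff_of_mem (by omega) (lie_mem_VectP (hF hD) hYp) g
    · intro Y Z hY hZ
      have h : ⁅D, Y + Z⁆ g = ⁅D, Y⁆ g + ⁅D, Z⁆ g := by
        simp only [Derivation.commutator_apply, Derivation.add_apply, map_add]; abel
      rw [h, map_add, hY, hZ, add_zero]
  · intro p hp i
    suffices P ≤ P.comap (pderiv i : Vect 𝕜 n).toLinearMap from this hp
    refine Submodule.span_le.2 ?_
    rintro _ ⟨Y, hY, g, hg, rfl⟩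
    change (pderiv i : Vect 𝕜 n) (⁅D, Y⁆ g) ∈ P
    have hcomm : ∀ D' ∈ F, ⁅(pderiv i : Vect 𝕜 n), D'⁆ = 0 := fun D' hD' =>
      lie_const (pderiv_mem i) (hF hD')
    have h : (pderiv i : Vect 𝕜 n) (⁅D, Y⁆ g)
        = ⁅D, ⁅(pderiv i : Vect 𝕜 n), Y⁆⁆ g + ⁅D, Y⁆ (pderiv i g) := by
      have hc : ∀ b, (pderiv i : Vect 𝕜 n) (D b) = D (pderiv i b) := fun b => by
        rw [← sub_eq_zero, ← Derivation.commutator_apply, hcomm D hD, Derivation.zero_apply]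
      simp only [Derivation.commutator_apply, map_sub, hc]
      abel
    rw [h]
    refine P.add_mem (hgen _ (L.lie_mem (hconst (pderiv_mem i)) hY) g hg) (hgen _ hY _ ?_)
    intro D' hD'
    have h2 := congrArg (fun Z : Vect 𝕜 n => Z g) (hcomm D' hD')
    simp only [Derivation.commutator_apply, hg D' hD'] at h2
    simpa using h2

lemma le_stabilizer_invariants [CharZero 𝕜] {L : LieSubalgebra 𝕜 (Vect 𝕜 n)}
    (hL : IsGradedSubalg 𝕜 n L) (hconst : VectP 𝕜 n (-1) ≤ L.toSubmodule)
    {F : Submodule 𝕜 (Vect 𝕜 n)} (hF : F ≤ VectP 𝕜 n (-1))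
    (hstab : ∀ x ∈ L.toSubmodule ⊓ VectP 𝕜 n 0, ∀ y ∈ F, ⁅x, y⁆ ∈ F) :
    L ≤ stabilizerSubalg (invariants F) := by
  intro Y hY g hg D hD
  have h := lie_apply_invariants hL hconst hF hstab hD hY hg
  rw [Derivation.commutator_apply, hg D hD, map_zero, sub_zero] at h
  exact h

lemma irreducible_of_max [CharZero 𝕜] (hn : 0 < n) {L : LieSubalgebra 𝕜 (Vect 𝕜 n)}
    (hfd : FiniteDimensional 𝕜 L) (hL : IsGradedSubalg 𝕜 n L) (hmax : IsMaxSubalg 𝕜 n L)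
    (hconst : VectP 𝕜 n (-1) ≤ L.toSubmodule)
    {F : Submodule 𝕜 (Vect 𝕜 n)} (hF : F ≤ VectP 𝕜 n (-1))
    (hstab : ∀ x ∈ L.toSubmodule ⊓ VectP 𝕜 n 0, ∀ y ∈ F, ⁅x, y⁆ ∈ F) :
    F = ⊥ ∨ F = VectP 𝕜 n (-1) := by
  by_contra! hcon
  obtain ⟨hbot, hne⟩ := hcon
  obtain ⟨l, -, hlF, T, hTl⟩ := exists_linear_form hF hne
  obtain ⟨D, hDF, hD⟩ := Submodule.exists_mem_ne_zero_of_ne_bot hbot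
  obtain ⟨i, hi⟩ : ∃ i, D (X i) ≠ 0 := by
    by_contra! hall
    exact hD (MvPolynomial.derivation_ext fun i => by simp [hall i])
  refine false_of_le hn hfd hmax (le_stabilizer_invariants hL hconst hF hstab) ?_ one_ne_zero hD
    (fun h g hg => ?_)
  · intro htop
    -- `x_i T` maps the invariant `l` to `x_i`, which is not constant along `D`.
    have hm : (X i : MvPolynomial (Fin n) 𝕜) • T ∈ stabilizerSubalg (invariants F) := by
      rw [htop]; trivial
    have h1 := hm l hlF D hDF
    rw [Derivation.smul_apply, hTl, smul_eq_mul, mul_one] at h1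
    exact hi h1
  · rw [Derivation.smul_apply, hg D hDF, smul_zero]
    exact Submodule.zero_mem _

end Helpers

/-- Let `L` be a finite-dimensional graded maximal subalgebra of `Vect_pol(E)`.  Then
`L₋₁ = Vect₋₁(E)` and the representation of `L₀ = L ∩ Vect₀(E)` on `L₋₁` by the adjoint
action is irreducible. -/
theorem statement8 (𝕜 : Type) [RCLike 𝕜] (n : ℕ) (hn : 0 < n)
    (L : LieSubalgebra 𝕜 (Vect 𝕜 n)) (hfd : FiniteDimensional 𝕜 L)
    (hgraded : IsGradedSubalg 𝕜 n L) (hmax : IsMaxSubalg 𝕜 n L) :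
    L.toSubmodule ⊓ VectP 𝕜 n (-1) = VectP 𝕜 n (-1) ∧ IsIrreducibleRep 𝕜 n L := by
  have h1 := degree_neg_one_eq hn hfd hgraded hmax
  refine ⟨h1, ?_, ?_⟩
  · rw [h1]
    intro hbot
    have h2 := pderiv_mem (𝕜 := 𝕜) (⟨0, hn⟩ : Fin n)
    rw [hbot, Submodule.mem_bot] at h2
    have h3 := congrArg (fun Y : Vect 𝕜 n => Y (X ⟨0, hn⟩)) h2
    simp at h3
  · intro F hF hstab
    rw [h1] at hF ⊢
    exact irreducible_of_max hn hfd hgraded hmax (inf_eq_right.1 h1) hF hstab
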